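/- Let P ⊂ ℝ^n be a convex polytope which is the convex hull of a finite subset of ℤ^n, containing 0 in its interior, and suppose P is reflexive: every supporting hyperplane of a codimension-one face of P has the form {y ∈ ℝ^n : ⟨v, y⟩ = −1} for some v ∈ ℤ^n. Then the polar polyhedron P° := {x ∈ ℝ^n : ⟨x, y⟩ ≥ −1 for all y ∈ P} is again a convex polytope which is the convex hull of a finite subset of ℤ^n, contains 0 in its interior, and is reflexive (every supporting hyperplane of a codimension-one face of P° has the form {y : ⟨w, y⟩ = −1} for some w ∈ ℤ^n); moreover (P°)° = P. -/

import Mathlib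

/-!
The identity `(P°)° = P` is the bipolar theorem, i.e. separation of a point from the closed
convex set `P ∋ 0`. The two integrality claims rest on one correspondence: a facet of one of the
two polytopes spans `ℝ^n` linearly, so it pins down the normal vector that equals `-1` on it, and
this normal vector is an extreme point of the other polytope.

* An extreme point `x` of `P°` satisfies `⟨x, v⟩ = -1` for a linearly spanning set of generators
  `v` of `P` (`span_active_eq_top`: otherwise `x` could be moved in both directions `± d` with `d`
  orthogonal to all of them). Hence `{y ∈ P | ⟨x, y⟩ = -1}` is a facet, and reflexivity of `P`
  makes `x` integral. By Krein–Milman, `P°` is the convex hull of its lattice points.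
* A facet of `P°` is cut out by `⟨u, x⟩ = -1` with `u ∈ (P°)° = P`, and it spans `ℝ^n`, so `u` is an
  extreme point of `P`, hence one of the integral generators of `P`.

With the definition of reflexivity used here, nothing is reflexive in dimensions `0` and `1`: for
`n = 1` the empty face has dimension `n - 1`, and for `n = 0` so does `P` itself. Those cases are
vacuous (`two_le_of_reflexive`).
-/

open scoped BigOperators

/-- A set `P ⊆ ℝ^n` is reflexive if every supporting hyperplane of a codimension-one
face of `P` can be written as `{y | ⟨w, y⟩ = -1}` for some integral vector `w`. -/
def IsReflexivePolytope {n : ℕ} (P : Set (Fin n → ℝ)) : Prop :=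
  ∀ (v : Fin n → ℝ) (c : ℝ),
    (∀ y ∈ P, c ≤ ∑ i, v i * y i) →
    Module.finrank ℝ (vectorSpan ℝ {y | y ∈ P ∧ ∑ i, v i * y i = c}) = n - 1 →
    ∃ w : Fin n → ℤ,
      {y : Fin n → ℝ | ∑ i, v i * y i = c} =
        {y : Fin n → ℝ | ∑ i, (w i : ℝ) * y i = -1}

/-- The polar polyhedron `P° = {x | ⟨x, y⟩ ≥ -1 for all y ∈ P}`. -/
def polarPolyhedron {n : ℕ} (P : Set (Fin n → ℝ)) : Set (Fin n → ℝ) :=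
  {x | ∀ y ∈ P, -1 ≤ ∑ i, x i * y i}

open scoped Matrix Topology

lemma continuous_dot_left {n : ℕ} (y : Fin n → ℝ) : Continuous fun x : Fin n → ℝ => x ⬝ᵥ y := by
  unfold dotProduct; fun_prop

lemma continuous_dot_right {n : ℕ} (x : Fin n → ℝ) : Continuous fun y : Fin n → ℝ => x ⬝ᵥ y := by
  unfold dotProduct; fun_prop

lemma mem_polar_iff {n : ℕ} {P : Set (Fin n → ℝ)} {x : Fin n → ℝ} :
    x ∈ polarPolyhedron P ↔ ∀ y ∈ P, -1 ≤ x ⬝ᵥ y := Iff.rfl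

lemma mem_polar_convexHull_iff {n : ℕ} {S : Set (Fin n → ℝ)} {x : Fin n → ℝ} :
    x ∈ polarPolyhedron (convexHull ℝ S) ↔ ∀ y ∈ S, -1 ≤ x ⬝ᵥ y := by
  refine ⟨fun h y hy => h y (subset_convexHull ℝ S hy), fun h => ?_⟩
  have hconv : Convex ℝ {y : Fin n → ℝ | -1 ≤ x ⬝ᵥ y} := by
    intro a ha b hb s t hs ht hst
    simp only [Set.mem_ofPred_eq, dotProduct_add, dotProduct_smul, smul_eq_mul] at *
    nlinarith
  exact fun y hy => convexHull_min h hconv hy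

lemma convex_polar {n : ℕ} (P : Set (Fin n → ℝ)) : Convex ℝ (polarPolyhedron P) := by
  intro a ha b hb s t hs ht hst
  rw [mem_polar_iff] at *
  intro y hy
  have h1 := ha y hy
  have h2 := hb y hy
  rw [add_dotProduct, smul_dotProduct, smul_dotProduct, smul_eq_mul, smul_eq_mul]
  nlinarith

lemma isClosed_polar {n : ℕ} (P : Set (Fin n → ℝ)) : IsClosed (polarPolyhedron P) := by
  have : polarPolyhedron P = ⋂ y ∈ P, {x | -1 ≤ x ⬝ᵥ y} := by
    ext x; simp [mem_polar_iff]
  rw [this]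
  exact isClosed_biInter fun y _ => isClosed_le continuous_const (continuous_dot_left y)

/-- Testing against the points `± r eᵢ` of `P` bounds the coordinates of every point of `P°`. -/
lemma exists_bound_polar {n : ℕ} {P : Set (Fin n → ℝ)} (h0 : 0 ∈ interior P) :
    ∃ C : ℝ, ∀ x ∈ polarPolyhedron P, ∀ i, |x i| ≤ C := by
  obtain ⟨r, hr, hball⟩ := Metric.nhds_basis_closedBall.mem_iff.1 (mem_interior_iff_mem_nhds.1 h0)
  refine ⟨1 / r, fun x hx i => ?_⟩
  have key : ∀ s : ℝ, |s| ≤ r → -1 ≤ x i * s := by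
    intro s hs
    have hmem : (Pi.single i s : Fin n → ℝ) ∈ P := by
      apply hball
      rw [mem_closedBall_zero_iff, pi_norm_le_iff_of_nonneg hr.le]
      intro j
      by_cases hj : j = i
      · subst hj; simpa using hs
      · simpa [hj] using hr.le
    have := mem_polar_iff.1 hx _ hmem
    rwa [dotProduct_single] at this
  have h1 := key r (abs_of_pos hr).le
  have h2 := key (-r) (by rw [abs_neg, abs_of_pos hr])
  rw [le_div_iff₀ hr]
  rcases abs_cases (x i) with h | h <;> nlinarith

lemma isCompact_polar {n : ℕ} {P : Set (Fin n → ℝ)} (h0 : 0 ∈ interior P) :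
    IsCompact (polarPolyhedron P) := by
  obtain ⟨C, hC⟩ := exists_bound_polar h0
  refine (isCompact_univ_pi fun _ : Fin n => isCompact_Icc (a := -C) (b := C)).of_isClosed_subset
    (isClosed_polar P) fun x hx i _ => abs_le.1 (hC x hx i)

lemma finite_lattice_polar {n : ℕ} {P : Set (Fin n → ℝ)} (h0 : 0 ∈ interior P) :
    {w : Fin n → ℤ | (fun i => (w i : ℝ)) ∈ polarPolyhedron P}.Finite := by
  obtain ⟨C, hC⟩ := exists_bound_polar h0
  refine (Set.finite_Icc (fun _ : Fin n => -⌈C⌉) (fun _ => ⌈C⌉)).subset fun w hw => ?_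
  have h : ∀ i, |w i| ≤ ⌈C⌉ := fun i => by
    have := (hC _ hw i).trans (Int.le_ceil C)
    exact_mod_cast this
  exact ⟨fun i => (abs_le.1 (h i)).1, fun i => (abs_le.1 (h i)).2⟩

lemma zero_mem_interior_polar {n : ℕ} {S : Set (Fin n → ℝ)} (hS : S.Finite) :
    0 ∈ interior (polarPolyhedron (convexHull ℝ S)) := by
  rw [mem_interior_iff_mem_nhds]
  have : ∀ᶠ x in 𝓝 (0 : Fin n → ℝ), ∀ y ∈ S, -1 ≤ x ⬝ᵥ y := by
    rw [Filter.eventually_all_finite hS]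
    intro y _
    have ht := (continuous_dot_left y).tendsto 0
    rw [zero_dotProduct] at ht
    exact (ht.eventually_const_lt (by norm_num : (-1 : ℝ) < 0)).mono fun _ h => h.le
  filter_upwards [this] with x hx using mem_polar_convexHull_iff.2 hx

lemma exists_dot_eq {n : ℕ} (f : (Fin n → ℝ) →ₗ[ℝ] ℝ) : ∃ d : Fin n → ℝ, ∀ y, f y = d ⬝ᵥ y := by
  refine ⟨fun i => f (Pi.single i 1), fun y => ?_⟩
  rw [LinearMap.pi_apply_eq_sum_univ f y]
  refine Finset.sum_congr rfl fun i _ => ?_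
  rw [smul_eq_mul, mul_comm]
  congr 2
  ext j
  simp [Pi.single_apply, eq_comm]

/-- The bipolar theorem: a point outside the closed convex set `P ∋ 0` is strictly separated from
`P`, and the separating functional can be rescaled into `P°`. -/
lemma polar_polar {n : ℕ} {P : Set (Fin n → ℝ)} (hc : Convex ℝ P) (hcl : IsClosed P)
    (h0 : 0 ∈ P) : polarPolyhedron (polarPolyhedron P) = P := by
  ext z
  refine ⟨fun hz => ?_, fun hz x hx => ?_⟩
  · by_contra hzP
    obtain ⟨f, u, hfz, hfP⟩ := geometric_hahn_banach_point_closed hc hcl hzP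
    obtain ⟨d, hd⟩ := exists_dot_eq (f : (Fin n → ℝ) →ₗ[ℝ] ℝ)
    have hu : u < 0 := by simpa using hfP 0 h0
    have hmem : (-u)⁻¹ • d ∈ polarPolyhedron P := by
      rw [mem_polar_iff]
      intro y hy
      have h1 : u < d ⬝ᵥ y := by rw [← hd]; exact hfP y hy
      rw [smul_dotProduct, smul_eq_mul, inv_mul_eq_div, le_div_iff₀ (by linarith)]
      linarith
    have h2 := mem_polar_iff.1 hz _ hmem
    have h3 : d ⬝ᵥ z < u := by rw [← hd]; exact hfz
    rw [dotProduct_smul, smul_eq_mul, inv_mul_eq_div, le_div_iff₀ (by linarith),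
      dotProduct_comm] at h2
    linarith
  · have := mem_polar_iff.1 hx z hz
    rw [dotProduct_comm] at this
    exact this

/-- A set on a hyperplane `⟨x, ·⟩ = -1`, which misses the origin, has a linear span of dimension
one more than its affine span. -/
lemma finrank_span_eq {n : ℕ} {F : Set (Fin n → ℝ)} {x : Fin n → ℝ} (hF : F.Nonempty)
    (hx : ∀ y ∈ F, x ⬝ᵥ y = -1) :
    Module.finrank ℝ (Submodule.span ℝ F) = Module.finrank ℝ (vectorSpan ℝ F) + 1 := by
  obtain ⟨p, hp⟩ := hF
  have hker : ∀ y ∈ vectorSpan ℝ F, x ⬝ᵥ y = 0 := by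
    intro y hy
    rw [vectorSpan_def] at hy
    induction hy using Submodule.span_induction with
    | mem y hy =>
      obtain ⟨a, ha, b, hb, rfl⟩ := hy
      simp [hx a ha, hx b hb]
    | zero => simp
    | add a b _ _ ha hb => rw [dotProduct_add, ha, hb, add_zero]
    | smul c a _ ha => rw [dotProduct_smul, ha, smul_zero]
  have hp0 : p ≠ 0 := by
    rintro rfl
    simpa using hx _ hp
  have hsup : vectorSpan ℝ F ⊔ Submodule.span ℝ {p} = Submodule.span ℝ F := by
    apply le_antisymm
    · refine sup_le ?_ (Submodule.span_mono (by simpa using hp))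
      rw [vectorSpan_def, Submodule.span_le]
      rintro _ ⟨a, ha, b, hb, rfl⟩
      exact Submodule.sub_mem _ (Submodule.subset_span ha) (Submodule.subset_span hb)
    · rw [Submodule.span_le]
      intro y hy
      have : y = (y - p) + p := by abel
      rw [this]
      exact Submodule.add_mem_sup (vsub_mem_vectorSpan ℝ hy hp) (Submodule.mem_span_singleton_self p)
  have hdisj : vectorSpan ℝ F ⊓ Submodule.span ℝ {p} = ⊥ := by
    rw [Submodule.eq_bot_iff]
    rintro y ⟨h1, h2⟩
    obtain ⟨c, rfl⟩ := Submodule.mem_span_singleton.1 h2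
    have := hker _ h1
    rw [dotProduct_smul, hx p hp] at this
    have hc : c = 0 := by simpa using this
    simp [hc]
  have := Submodule.finrank_sup_add_finrank_inf_eq (vectorSpan ℝ F) (Submodule.span ℝ {p})
  rwa [hsup, hdisj, finrank_bot, add_zero, finrank_span_singleton hp0] at this

lemma eq_of_dot_eq_on_spanning {n : ℕ} {F : Set (Fin n → ℝ)} (hF : Submodule.span ℝ F = ⊤)
    {a b : Fin n → ℝ} (h : ∀ y ∈ F, a ⬝ᵥ y = b ⬝ᵥ y) : a = b := by
  have key : ∀ y : Fin n → ℝ, (a - b) ⬝ᵥ y = 0 := by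
    intro y
    have hy : y ∈ Submodule.span ℝ F := hF ▸ Submodule.mem_top
    induction hy using Submodule.span_induction with
    | mem y hy => rw [sub_dotProduct, h y hy, sub_self]
    | zero => simp
    | add a b _ _ ha hb => rw [dotProduct_add, ha, hb, add_zero]
    | smul c a _ ha => rw [dotProduct_smul, ha, smul_zero]
  exact sub_eq_zero.1 (dotProduct_self_eq_zero.1 (key _))

/-- At an extreme point `x` of the polar of `conv S`, the constraints that are tight at `x` span
`ℝ^n`: a nonzero `d` orthogonal to all of them would give `x ± ε d ∈ P°` for small `ε`. -/
lemma span_active_eq_top {n : ℕ} {S : Set (Fin n → ℝ)} (hS : S.Finite) {x : Fin n → ℝ}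
    (hx : x ∈ (polarPolyhedron (convexHull ℝ S)).extremePoints ℝ) :
    Submodule.span ℝ {y | y ∈ S ∧ x ⬝ᵥ y = -1} = ⊤ := by
  by_contra hne
  obtain ⟨f, hf0, hf⟩ := Submodule.exists_le_ker_of_lt_top _ (lt_top_iff_ne_top.2 hne)
  obtain ⟨d, hd⟩ := exists_dot_eq f
  have hd0 : d ≠ 0 := by
    rintro rfl
    exact hf0 (LinearMap.ext fun y => by simp [hd])
  have hxS := mem_polar_convexHull_iff.1 hx.1
  have hev : ∀ᶠ t in 𝓝 (0 : ℝ), x + t • d ∈ polarPolyhedron (convexHull ℝ S) := by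
    simp only [mem_polar_convexHull_iff]
    rw [Filter.eventually_all_finite hS]
    intro y hy
    simp only [add_dotProduct, smul_dotProduct, smul_eq_mul]
    rcases (hxS y hy).eq_or_lt with h | h
    · have hdy : d ⬝ᵥ y = 0 := by
        rw [← hd]
        exact hf (Submodule.subset_span ⟨hy, h.symm⟩)
      exact Filter.Eventually.of_forall fun t => by rw [hdy, ← h]; simp
    · have hcont : Continuous fun t : ℝ => x ⬝ᵥ y + t * d ⬝ᵥ y := by fun_prop
      have ht := hcont.tendsto 0
      simp only [zero_mul, add_zero] at ht
      exact (ht.eventually_const_lt h).mono fun _ h => h.le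
  obtain ⟨ε, hε, hball⟩ := Metric.eventually_nhds_iff.1 hev
  have h1 := hball (y := ε / 2) (by rw [Real.dist_0_eq_abs, abs_of_pos (by linarith)]; linarith)
  have h2 := hball (y := -(ε / 2))
    (by rw [Real.dist_0_eq_abs, abs_neg, abs_of_pos (by linarith)]; linarith)
  have h3 := hx.2 h1 h2 ⟨1 / 2, 1 / 2, by norm_num, by norm_num, by norm_num, by
    ext i
    simp
    ring⟩
  have h4 : (ε / 2) • d = 0 := by simpa using h3
  rcases smul_eq_zero.1 h4 with h | h
  · linarith
  · exact hd0 h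

/-- In dimension one, the empty face on a hyperplane `y = c` with `c` far below `P` has the
dimension `n - 1 = 0` of a facet, and for `c < -1` that hyperplane is not of the form `w y = -1`.
In dimension zero, `P` is its own facet on the degenerate hyperplane `0 = 0`, which differs from `0 = -1`. -/
lemma two_le_of_reflexive {n : ℕ} {P : Set (Fin n → ℝ)} (hP : IsCompact P)
    (hrefl : IsReflexivePolytope P) : 2 ≤ n := by
  by_contra hn
  obtain rfl | rfl : n = 0 ∨ n = 1 := by omega
  · obtain ⟨w, hw⟩ := hrefl 0 0 (by simp) (Module.finrank_zero_of_subsingleton)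
    have : (0 : Fin 0 → ℝ) ∈ {y : Fin 0 → ℝ | ∑ i, (w i : ℝ) * y i = -1} := by
      rw [← hw]; simp
    simp at this
  · obtain ⟨C, hC⟩ := hP.isBounded.exists_norm_le
    have hlow : ∀ y ∈ P, -(|C| + 2) < y 0 := by
      intro y hy
      have h1 := (norm_le_pi_norm y 0).trans (hC y hy)
      rw [Real.norm_eq_abs] at h1
      linarith [le_abs_self C, neg_abs_le (y 0)]
    obtain ⟨w, hw⟩ := hrefl 1 (-(|C| + 2)) (fun y hy => by simpa using (hlow y hy).le) (by
      have : {y | y ∈ P ∧ ∑ i, (1 : Fin 1 → ℝ) i * y i = -(|C| + 2)} = ∅ := by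
        ext y
        simp only [Set.mem_ofPred_eq, Set.mem_empty_iff_false, iff_false, not_and]
        intro hy h
        have := hlow y hy
        simp at h
        linarith
      rw [this, vectorSpan_empty, finrank_bot])
    have hmem : (fun _ => -(|C| + 2) : Fin 1 → ℝ) ∈
        {y : Fin 1 → ℝ | ∑ i, (w i : ℝ) * y i = -1} := by
      rw [← hw]; simp
    have heq : (w 0 : ℝ) * (|C| + 2) = 1 := by
      simp at hmem
      linarith
    have hC0 := abs_nonneg C
    have hpos : (0 : ℝ) < w 0 := by
      by_contra h
      nlinarith
    have h1 : (1 : ℝ) ≤ w 0 := by exact_mod_cast hpos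
    nlinarith

/-- Extreme points of `P°` are normal vectors of facets of `P`, hence integral. -/
lemma extreme_polar_integral {n : ℕ} (hn : 2 ≤ n) {S : Set (Fin n → ℝ)} (hS : S.Finite)
    (hrefl : IsReflexivePolytope (convexHull ℝ S)) {x : Fin n → ℝ}
    (hx : x ∈ (polarPolyhedron (convexHull ℝ S)).extremePoints ℝ) :
    ∃ w : Fin n → ℤ, (fun i => (w i : ℝ)) = x := by
  set F : Set (Fin n → ℝ) := {y | y ∈ convexHull ℝ S ∧ x ⬝ᵥ y = -1} with hF
  have hspan : Submodule.span ℝ F = ⊤ := by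
    rw [eq_top_iff, ← span_active_eq_top hS hx]
    exact Submodule.span_mono fun y hy => ⟨subset_convexHull ℝ S hy.1, hy.2⟩
  have hne : F.Nonempty := by
    rw [Set.nonempty_iff_ne_empty]
    intro h
    have hrank : Module.finrank ℝ (Submodule.span ℝ F) = n := by
      rw [hspan, finrank_top, Module.finrank_fin_fun]
    rw [h, Submodule.span_empty, finrank_bot] at hrank
    omega
  have hdim := finrank_span_eq hne fun y hy => hy.2
  rw [hspan, finrank_top, Module.finrank_fin_fun] at hdim
  obtain ⟨w, hw⟩ := hrefl x (-1) hx.1 (by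
    change Module.finrank ℝ (vectorSpan ℝ F) = n - 1
    omega)
  refine ⟨w, eq_of_dot_eq_on_spanning hspan fun y hy => ?_⟩
  have : y ∈ {y : Fin n → ℝ | ∑ i, (w i : ℝ) * y i = -1} := by
    rw [← hw]; exact hy.2
  exact this.trans hy.2.symm

/-- If the face of `Q` cut out by `u ∈ Q°` spans `ℝ^n` (as a facet does), then `u` is an extreme
point of `Q°`: if `u` lies strictly between `a, b ∈ Q°`, then `a` and `b` also equal `-1` on that
face. -/
lemma normal_mem_extremePoints {n : ℕ} {Q : Set (Fin n → ℝ)} {u : Fin n → ℝ}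
    (hu : u ∈ polarPolyhedron Q)
    (hspan : Submodule.span ℝ {y | y ∈ Q ∧ u ⬝ᵥ y = -1} = ⊤) :
    u ∈ (polarPolyhedron Q).extremePoints ℝ := by
  rw [mem_extremePoints_iff_left]
  refine ⟨hu, ?_⟩
  rintro a ha b hb ⟨s, t, hs, ht, hst, rfl⟩
  refine eq_of_dot_eq_on_spanning hspan fun y hy => ?_
  have h1 := mem_polar_iff.1 ha y hy.1
  have h2 := mem_polar_iff.1 hb y hy.1
  have h3 := hy.2
  rw [h3]
  rw [add_dotProduct, smul_dotProduct, smul_dotProduct, smul_eq_mul, smul_eq_mul] at h3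
  have h4 : s * (a ⬝ᵥ y + 1) = -(t * (b ⬝ᵥ y + 1)) := by linear_combination h3 + hst
  have h5 : 0 ≤ t * (b ⬝ᵥ y + 1) := mul_nonneg ht.le (by linarith)
  by_contra hne
  have h6 : 0 < s * (a ⬝ᵥ y + 1) := mul_pos hs (by
    rcases h1.eq_or_lt with h | h
    · exact absurd h.symm hne
    · linarith)
  linarith

/-- A set `Q` with `0` in its interior is reflexive as soon as all extreme points of `Q°` are
integral, because the normalised facet normals of `Q` are such extreme points. -/
lemma reflexive_of_extreme_integral {n : ℕ} (hn : 2 ≤ n) {Q : Set (Fin n → ℝ)}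
    (h0 : 0 ∈ interior Q)
    (hint : ∀ u ∈ (polarPolyhedron Q).extremePoints ℝ,
      ∃ w : Fin n → ℤ, (fun i => (w i : ℝ)) = u) :
    IsReflexivePolytope Q := by
  intro v c hvc hdim
  have hvc' : ∀ y ∈ Q, c ≤ v ⬝ᵥ y := hvc
  have hc0 : c ≤ 0 := by simpa using hvc' 0 (interior_subset h0)
  have hc : c < 0 := by
    refine lt_of_le_of_ne hc0 ?_
    rintro rfl
    -- A small negative multiple of `v` lies in `Q`, which forces `v = 0`; the face is then all of
    -- `Q`, of dimension `n`.
    have hcont : Continuous fun t : ℝ => t • v := by fun_prop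
    have hev : ∀ᶠ t in 𝓝 (0 : ℝ), t • v ∈ Q :=
      hcont.continuousAt.preimage_mem_nhds (by simpa using mem_interior_iff_mem_nhds.1 h0)
    obtain ⟨ε, hε, hball⟩ := Metric.eventually_nhds_iff.1 hev
    have h1 : -(ε / 2) • v ∈ Q := hball (y := -(ε / 2))
      (by rw [Real.dist_0_eq_abs, abs_neg, abs_of_pos (by linarith)]; linarith)
    have h2 := hvc' _ h1
    rw [dotProduct_smul, smul_eq_mul] at h2
    have h3 : 0 ≤ v ⬝ᵥ v := Finset.sum_nonneg fun i _ => mul_self_nonneg (v i)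
    have h4 : v ⬝ᵥ v = 0 := by nlinarith
    have hv := dotProduct_self_eq_zero.1 h4
    subst hv
    have hface : {y | y ∈ Q ∧ ∑ i, (0 : Fin n → ℝ) i * y i = 0} = Q := by ext; simp
    rw [hface] at hdim
    have haff : affineSpan ℝ Q = ⊤ :=
      affineSpan_eq_top_of_nonempty_interior ⟨0, interior_mono (subset_convexHull ℝ Q) h0⟩
    rw [← direction_affineSpan, haff, AffineSubspace.direction_top, finrank_top,
      Module.finrank_fin_fun] at hdim
    omega
  -- Normalise the inequality to `⟨u, ·⟩ ≥ -1`.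
  set u : Fin n → ℝ := (-c)⁻¹ • v with hu
  have hiff : ∀ y, v ⬝ᵥ y = c ↔ u ⬝ᵥ y = -1 := by
    intro y
    rw [hu, smul_dotProduct, smul_eq_mul, inv_mul_eq_div, div_eq_iff (by linarith)]
    simp
  have huQ : u ∈ polarPolyhedron Q := by
    rw [mem_polar_iff]
    intro y hy
    rw [hu, smul_dotProduct, smul_eq_mul, inv_mul_eq_div, le_div_iff₀ (by linarith)]
    linarith [hvc' y hy]
  have hface : {y | y ∈ Q ∧ ∑ i, v i * y i = c} = {y | y ∈ Q ∧ u ⬝ᵥ y = -1} := by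
    ext y
    exact and_congr_right fun _ => hiff y
  rw [hface] at hdim
  have hne : {y | y ∈ Q ∧ u ⬝ᵥ y = -1}.Nonempty := by
    rw [Set.nonempty_iff_ne_empty]
    intro h
    rw [h, vectorSpan_empty, finrank_bot] at hdim
    omega
  have hspan : Submodule.span ℝ {y | y ∈ Q ∧ u ⬝ᵥ y = -1} = ⊤ := by
    apply Submodule.eq_top_of_finrank_eq
    rw [finrank_span_eq hne fun y hy => hy.2, hdim, Module.finrank_fin_fun]
    omega
  obtain ⟨w, hw⟩ := hint u (normal_mem_extremePoints huQ hspan)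
  refine ⟨w, ?_⟩
  ext y
  change v ⬝ᵥ y = c ↔ (fun i => (w i : ℝ)) ⬝ᵥ y = -1
  rw [hw]
  exact hiff y

/-- Batyrev's lemma: if `P` is a reflexive lattice polytope (the convex hull of finitely
many lattice points, with `0` in its interior), then its polar polyhedron `P°` is again
a reflexive lattice polytope with `0` in its interior, and `(P°)° = P`. -/
theorem polar_of_reflexive_is_reflexive {n : ℕ} (V : Finset (Fin n → ℤ))
    (P : Set (Fin n → ℝ))
    (hP : P = convexHull ℝ ((fun v : Fin n → ℤ => fun i => (v i : ℝ)) '' ↑V))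
    (h0 : (0 : Fin n → ℝ) ∈ interior P)
    (hrefl : IsReflexivePolytope P) :
    (∃ V' : Finset (Fin n → ℤ),
        polarPolyhedron P =
          convexHull ℝ ((fun v : Fin n → ℤ => fun i => (v i : ℝ)) '' ↑V')) ∧
    (0 : Fin n → ℝ) ∈ interior (polarPolyhedron P) ∧
    IsReflexivePolytope (polarPolyhedron P) ∧
    polarPolyhedron (polarPolyhedron P) = P := by
  subst hP
  set S : Set (Fin n → ℝ) := (fun v : Fin n → ℤ => fun i => (v i : ℝ)) '' ↑V with hSdef
  have hS : S.Finite := V.finite_toSet.image _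
  have hcomp : IsCompact (convexHull ℝ S) := hS.isCompact_convexHull ℝ
  have hn := two_le_of_reflexive hcomp hrefl
  have hbi := polar_polar (convex_convexHull ℝ S) hcomp.isClosed (interior_subset h0)
  have h0' := zero_mem_interior_polar hS
  refine ⟨⟨(finite_lattice_polar h0).toFinset, ?_⟩, h0', ?_, hbi⟩
  · rw [Set.Finite.coe_toFinset]
    apply Set.Subset.antisymm
    · have hfin := (finite_lattice_polar h0).image (fun v : Fin n → ℤ => fun i => (v i : ℝ))
      refine (closure_convexHull_extremePoints (isCompact_polar h0) (convex_polar _)).symm.subset.trans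
        ?_
      refine closure_minimal (convexHull_mono fun x hx => ?_) (hfin.isCompact_convexHull ℝ).isClosed
      obtain ⟨w, rfl⟩ := extreme_polar_integral hn hS hrefl hx
      exact ⟨w, hx.1, rfl⟩
    · refine convexHull_min ?_ (convex_polar _)
      rintro _ ⟨w, hw, rfl⟩
      exact hw
  · refine reflexive_of_extreme_integral hn h0' fun u hu => ?_
    rw [hbi] at hu
    obtain ⟨w, -, hw⟩ := extremePoints_convexHull_subset hu
    exact ⟨w, hw⟩
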